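/- arXiv:2202.08312 — 4 statements merged into one kernel-verified Lean document; each statement's English description precedes it below -/
import Mathlib

section
/- Let n ≥ 1, let S be an invertible n×n real matrix, and let H be an invertible n×n real matrix. Then there exists an invertible lower-triangular n×n real matrix Ĥ with strictly positive diagonal entries such that ĤᵀĤ = HᵀH, every column of Ĥ has the same ℓ2-norm as the corresponding column of H, and for every matrix W with W·H = S one has L(S·Ĥ⁻¹, Ĥ) ≤ L(W, H), where L(W, H) = (max_i ∑_j H_{ji}²)·‖W‖_F². -/
open Matrix

/-- **Reverse Cholesky decomposition**: a real positive definite matrix `A` can be written as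
`Lᵀ * L` with `L` lower-triangular with positive diagonal. -/
theorem Matrix.PosDef.exists_lowerTriangular_transpose_mul_self {ι : Type*} [Fintype ι]
    [LinearOrder ι] [WellFoundedLT ι] [LocallyFiniteOrderBot ι] {A : Matrix ι ι ℝ}
    (hA : A.PosDef) :
    ∃ L : Matrix ι ι ℝ, (∀ i j, i < j → L i j = 0) ∧ (∀ i, 0 < L i i) ∧ Lᵀ * L = A := by
  have hB := hA.inv
  set M := LDL.lowerInv hB
  have hM_det : IsUnit M.det := (Matrix.isUnit_iff_isUnit_det M).1 (isUnit_of_invertible M)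
  have hM_tri : ∀ i j, i < j → M i j = 0 := fun _ _ h => LDL.lowerInv_triangular hB h
  have hM_diag : ∀ i, M i i ≠ 0 := by
    rw [Matrix.det_of_isLowerTriangular M fun i j h => hM_tri i j h] at hM_det
    exact fun i => Finset.prod_ne_zero_iff.1 hM_det.ne_zero i (Finset.mem_univ i)
  set d := LDL.diagEntries hB
  have h_conj : M * A⁻¹ * Mᵀ = diagonal d := by
    rw [← conjTranspose_eq_transpose_of_trivial]
    exact (LDL.diag_eq_lowerInv_conj hB).symm
  have hd : ∀ i, 0 < d i := by
    rw [← posDef_diagonal_iff, ← h_conj, ← conjTranspose_eq_transpose_of_trivial]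
    exact hB.mul_mul_conjTranspose_same
      (Matrix.vecMul_injective_iff_isUnit.2 (isUnit_of_invertible M))
  set c : ι → ℝ := fun i => |M i i| / (M i i * √(d i))
  have hc : ∀ i, c i * d i * c i = 1 := fun i => by
    have h_sqrt : √(d i) ≠ 0 := (Real.sqrt_pos.2 (hd i)).ne'
    have h_diag := hM_diag i
    simp only [c]
    field_simp
    rw [Real.sq_sqrt (hd i).le, sq_abs]
  have h_one : (diagonal c * M) * (A⁻¹ * (diagonal c * M)ᵀ) = 1 := by
    calc (diagonal c * M) * (A⁻¹ * (diagonal c * M)ᵀ)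
        = diagonal c * (M * A⁻¹ * Mᵀ) * diagonal c := by
          simp only [transpose_mul, diagonal_transpose, Matrix.mul_assoc]
      _ = 1 := by
          simp only [h_conj, diagonal_mul_diagonal, hc, diagonal_one]
  refine ⟨diagonal c * M, fun i j h => by simp [hM_tri i j h], fun i => ?_, ?_⟩
  · have h_diag := hM_diag i
    have h_sqrt : 0 < √(d i) := Real.sqrt_pos.2 (hd i)
    have h_eq : c i * M i i = |M i i| / √(d i) := by
      simp only [c]
      field_simp
    rw [diagonal_mul, h_eq]
    positivity
  · rw [mul_eq_one_comm, Matrix.mul_assoc] at h_one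
    rw [← Matrix.inv_eq_right_inv h_one,
      Matrix.nonsing_inv_nonsing_inv _ ((Matrix.isUnit_iff_isUnit_det A).1 hA.isUnit)]

theorem Matrix.sum_sum_sq_eq_trace {m n : Type*} [Fintype m] [Fintype n] (A : Matrix m n ℝ) :
    ∑ i, ∑ j, (A i j) ^ 2 = (A * Aᵀ).trace := by
  simp [trace, mul_apply, sq]

theorem Matrix.sum_sq_col_eq_transpose_mul_self {m n : Type*} [Fintype m] (A : Matrix m n ℝ)
    (i : n) : ∑ j, (A j i) ^ 2 = (Aᵀ * A) i i := by
  simp [mul_apply, sq]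

/-- Theorem 2 of the paper (`thm:square_lt_h`): for invertible `S` and any
invertible `H`, there is an invertible lower-triangular `Ĥ` with positive
diagonal such that `ĤᵀĤ = HᵀH`, the column norms of `Ĥ` match those of `H`,
and for any `W` with `W·H = S`, the factorization `(S·Ĥ⁻¹, Ĥ)` achieves at
most the loss of `(W, H)`, where `L(W,H) = (max_i ‖H_{:,i}‖₂²)·‖W‖_F²`. -/
theorem square_lower_triangular_factorization (n : ℕ) (hn : 1 ≤ n)
    (S H : Matrix (Fin n) (Fin n) ℝ) (hS : IsUnit S.det) (hH : IsUnit H.det) :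
    ∃ Hhat : Matrix (Fin n) (Fin n) ℝ,
      IsUnit Hhat.det ∧
      (∀ i j : Fin n, i < j → Hhat i j = 0) ∧
      (∀ i : Fin n, 0 < Hhat i i) ∧
      Hhatᵀ * Hhat = Hᵀ * H ∧
      (∀ i : Fin n, ∑ j, (Hhat j i) ^ 2 = ∑ j, (H j i) ^ 2) ∧
      (∀ W : Matrix (Fin n) (Fin n) ℝ, W * H = S →
        (⨆ i : Fin n, ∑ j, (Hhat j i) ^ 2) * (∑ i, ∑ j, ((S * Hhat⁻¹) i j) ^ 2) ≤
          (⨆ i : Fin n, ∑ j, (H j i) ^ 2) * (∑ i, ∑ j, (W i j) ^ 2)) := by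
  have h_pos : (Hᵀ * H).PosDef := by
    rw [← conjTranspose_eq_transpose_of_trivial]
    exact PosDef.conjTranspose_mul_self H
      (Matrix.mulVec_injective_iff_isUnit.2 ((Matrix.isUnit_iff_isUnit_det H).2 hH))
  obtain ⟨L, hL_tri, hL_diag, hL⟩ := h_pos.exists_lowerTriangular_transpose_mul_self
  have hL_col (i : Fin n) : ∑ j, (L j i) ^ 2 = ∑ j, (H j i) ^ 2 := by
    simp only [sum_sq_col_eq_transpose_mul_self, hL]
  have hL_det : IsUnit L.det := by
    rw [Matrix.det_of_isLowerTriangular L fun i j h => hL_tri i j h]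
    exact (Finset.prod_pos fun i _ => hL_diag i).ne'.isUnit
  refine ⟨L, hL_det, hL_tri, hL_diag, hL, hL_col, fun W hW => le_of_eq ?_⟩
  have h_gram (X : Matrix (Fin n) (Fin n) ℝ) :
      (S * X⁻¹) * (S * X⁻¹)ᵀ = S * (Xᵀ * X)⁻¹ * Sᵀ := by
    simp only [transpose_mul, Matrix.mul_inv_rev, transpose_nonsing_inv, Matrix.mul_assoc]
  have hW' : W = S * H⁻¹ := by rw [← hW, Matrix.mul_nonsing_inv_cancel_right _ _ hH]
  simp only [hL_col, sum_sum_sq_eq_trace, hW', h_gram, hL]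
end

section
/- Let n ≥ 1 and let S be an invertible n×n real matrix. Then there exists exactly one pair (X, λ), where X is an n×n real symmetric positive-definite matrix with X_{ii} = 1 for every i and λ ∈ ℝⁿ, such that SᵀS = X·diag(λ)·X. -/
open Matrix

namespace Matrix

variable {ι : Type*}

theorem PosSemidef.sq_apply_le {M : Matrix ι ι ℝ} (hM : M.PosSemidef) (i j : ι) :
    M i j ^ 2 ≤ M i i * M j j := by
  have hdet := (hM.submatrix ![i, j]).det_nonneg
  have hsymm : M j i = M i j := by simpa using hM.1.apply i j
  rw [det_fin_two] at hdet
  simp only [submatrix_apply, cons_val_zero, cons_val_one, hsymm] at hdet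
  linarith

variable [Fintype ι]

/-- Positive definiteness is an open condition on Hermitian real matrices. -/
theorem PosDef.eventually_posDef {X : Matrix ι ι ℝ} (hX : X.PosDef) :
    ∀ᶠ Y in nhds X, Y.IsHermitian → Y.PosDef := by
  have hpos : ∀ᶠ Y in nhds X, ∀ v ∈ Metric.sphere (0 : ι → ℝ) 1, 0 < v ⬝ᵥ (Y *ᵥ v) := by
    refine (isCompact_sphere (0 : ι → ℝ) 1).eventually_forall_of_forall_eventually fun v hv => ?_
    have hcont : Continuous fun p : Matrix ι ι ℝ × (ι → ℝ) => p.2 ⬝ᵥ (p.1 *ᵥ p.2) := by fun_prop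
    have hv0 : v ≠ 0 := ne_zero_of_mem_unit_sphere ⟨v, hv⟩
    have hXv : 0 < v ⬝ᵥ (X *ᵥ v) := by simpa using hX.dotProduct_mulVec_pos hv0
    exact hcont.continuousAt.eventually_const_lt hXv
  filter_upwards [hpos] with Y hY hYh
  refine .of_dotProduct_mulVec_pos hYh fun {v} hv => ?_
  have hnorm : 0 < ‖v‖ := norm_pos_iff.mpr hv
  have hunit := hY (‖v‖⁻¹ • v) (by simp [norm_smul, hnorm.ne'])
  rw [mulVec_smul, smul_dotProduct, dotProduct_smul, smul_smul, smul_eq_mul] at hunit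
  simpa using pos_of_mul_pos_right hunit (by positivity)

theorem isClosed_setOf_posSemidef : IsClosed {X : Matrix ι ι ℝ | X.PosSemidef} := by
  simp only [posSemidef_iff_dotProduct_mulVec, Set.ofPred_and, Set.ofPred_forall, IsHermitian]
  refine (isClosed_eq (by fun_prop) (by fun_prop)).inter (isClosed_iInter fun v => ?_)
  exact isClosed_le (by fun_prop) (by fun_prop)

theorem isCompact_setOf_posSemidef_diag_one :
    IsCompact {X : Matrix ι ι ℝ | X.PosSemidef ∧ ∀ i, X i i = 1} := by
  have hbox : IsCompact (Set.univ.pi fun _ : ι => Set.univ.pi fun _ : ι => Set.Icc (-1 : ℝ) 1) :=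
    isCompact_univ_pi fun _ => isCompact_univ_pi fun _ => isCompact_Icc
  refine IsCompact.of_isClosed_subset (X := Matrix ι ι ℝ) hbox ?_ ?_
  · simp only [Set.ofPred_and, Set.ofPred_forall]
    exact isClosed_setOf_posSemidef.inter
      (isClosed_iInter fun i => isClosed_eq (by fun_prop) continuous_const)
  · rintro X ⟨hX, hdiag⟩ i - j -
    have hsq := hX.sq_apply_le i j
    rw [hdiag, hdiag, mul_one] at hsq
    exact ⟨by nlinarith, by nlinarith⟩

theorem trace_conj_congr (S P Z : Matrix ι ι ℝ) :
    (S * (P * Z * P) * Sᵀ).trace = (P * (Sᵀ * S) * P * Z).trace := by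
  calc (S * (P * Z * P) * Sᵀ).trace = ((S * P * Z) * (P * Sᵀ)).trace := by simp only [mul_assoc]
    _ = ((P * Sᵀ) * (S * P * Z)).trace := trace_mul_comm _ _
    _ = _ := by simp only [mul_assoc]

variable [DecidableEq ι]

theorem PosSemidef.det_le_trace_pow {M : Matrix ι ι ℝ} (hM : M.PosSemidef) :
    M.det ≤ M.trace ^ Fintype.card ι := by
  have htrace : M.trace = ∑ i, hM.1.eigenvalues i := by
    simpa using hM.1.trace_eq_sum_eigenvalues
  have hdet : M.det = ∏ i, hM.1.eigenvalues i := by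
    simpa using hM.1.det_eq_prod_eigenvalues
  rw [hdet, ← Finset.card_univ, ← Finset.prod_const]
  refine Finset.prod_le_prod (fun i _ => hM.eigenvalues_nonneg i) fun i hi => ?_
  rw [htrace]
  exact Finset.single_le_sum (fun j _ => hM.eigenvalues_nonneg j) hi

theorem exists_posDef_diag_one_forall_trace_le {S : Matrix ι ι ℝ} (hS : IsUnit S.det) :
    ∃ X : Matrix ι ι ℝ, (X.PosDef ∧ ∀ i, X i i = 1) ∧
      ∀ Y : Matrix ι ι ℝ, Y.PosDef → (∀ i, Y i i = 1) →
        (S * X⁻¹ * Sᵀ).trace ≤ (S * Y⁻¹ * Sᵀ).trace := by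
  set N := Fintype.card ι
  set T := (S * Sᵀ).trace
  have hSS : (S * Sᵀ).PosSemidef := by simpa using posSemidef_self_mul_conjTranspose S
  have hdetS : 0 < S.det ^ 2 := sq_pos_of_ne_zero hS.ne_zero
  have hT : 0 ≤ T := hSS.trace_nonneg
  have hdet : ∀ Y : Matrix ι ι ℝ, Y.PosDef →
      S.det ^ 2 ≤ Y.det * (S * Y⁻¹ * Sᵀ).trace ^ N := fun Y hY => by
    have hM : (S * Y⁻¹ * Sᵀ).PosSemidef := by
      simpa using hY.inv.posSemidef.mul_mul_conjTranspose_same S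
    calc S.det ^ 2 = Y.det * (S * Y⁻¹ * Sᵀ).det := by
          have := hY.det_pos.ne'
          simp only [det_mul, det_transpose, det_nonsing_inv, Ring.inverse_eq_inv']
          field_simp
      _ ≤ _ := mul_le_mul_of_nonneg_left hM.det_le_trace_pow hY.det_pos.le
  set K := {X : Matrix ι ι ℝ | X.PosSemidef ∧ ∀ i, X i i = 1} ∩ {X | S.det ^ 2 ≤ X.det * T ^ N}
  have hK : IsCompact K := isCompact_setOf_posSemidef_diag_one.inter_right
    (isClosed_le continuous_const (by fun_prop))
  have hK_det : ∀ X ∈ K, 0 < X.det := fun X hX =>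
    pos_of_mul_pos_left (hdetS.trans_le hX.2) (by positivity)
  have hone : (1 : Matrix ι ι ℝ) ∈ K :=
    ⟨⟨.one, by simp⟩, by simpa [T] using hdet 1 .one⟩
  have hcont : ContinuousOn (fun X : Matrix ι ι ℝ => (S * X⁻¹ * Sᵀ).trace) K := fun X hX => by
    have hinv : ContinuousAt (Inv.inv : Matrix ι ι ℝ → Matrix ι ι ℝ) X :=
      continuousAt_matrix_inv X (by
        simpa [Ring.inverse_eq_inv'] using continuousAt_inv₀ (hK_det X hX).ne')
    have htr : Continuous fun Z : Matrix ι ι ℝ => (S * Z * Sᵀ).trace := by fun_prop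
    exact (htr.continuousAt.comp hinv).continuousWithinAt
  obtain ⟨X, hX, hmin⟩ := hK.exists_isMinOn ⟨1, hone⟩ hcont
  refine ⟨X, ⟨hX.1.1.posDef_iff_isUnit.mpr
    ((isUnit_iff_isUnit_det X).mpr (hK_det X hX).ne'.isUnit), hX.1.2⟩, fun Y hY hYdiag => ?_⟩
  rcases le_total (S * Y⁻¹ * Sᵀ).trace T with hle | hle
  · refine hmin ⟨⟨hY.posSemidef, hYdiag⟩, (hdet Y hY).trans ?_⟩
    have hnonneg : 0 ≤ (S * Y⁻¹ * Sᵀ).trace := PosSemidef.trace_nonneg (by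
      simpa using hY.inv.posSemidef.mul_mul_conjTranspose_same S)
    exact mul_le_mul_of_nonneg_left (pow_le_pow_left₀ hnonneg hle N) hY.det_pos.le
  · refine le_trans ?_ hle
    simpa [T] using hmin hone

/-- First-order condition for minimizing `Y ↦ tr (S Y⁻¹ Sᵀ)` along the direction `H`. -/
theorem trace_inv_mul_mul_inv_eq_zero {S X H : Matrix ι ι ℝ} (hX : X.PosDef)
    (hmin : ∀ᶠ t : ℝ in nhds 0,
      (X + t • H).PosDef ∧ (S * X⁻¹ * Sᵀ).trace ≤ (S * (X + t • H)⁻¹ * Sᵀ).trace) :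
    (S * (X⁻¹ * H * X⁻¹) * Sᵀ).trace = 0 := by
  set g : ℝ → ℝ := fun t => (S * (X⁻¹ * H * (X + t • H)⁻¹) * Sᵀ).trace
  have hg : ContinuousAt g 0 := by
    have hinv : ContinuousAt (Inv.inv : Matrix ι ι ℝ → Matrix ι ι ℝ) (X + (0 : ℝ) • H) :=
      continuousAt_matrix_inv _ (by
        simpa [Ring.inverse_eq_inv'] using continuousAt_inv₀ hX.det_pos.ne')
    have hlin : Continuous fun t : ℝ => X + t • H := by fun_prop
    have htr : Continuous fun Z : Matrix ι ι ℝ => (S * (X⁻¹ * H * Z) * Sᵀ).trace := by fun_prop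
    exact htr.continuousAt.comp (ContinuousAt.comp (f := fun t : ℝ => X + t • H) hinv
      hlin.continuousAt)
  have hsign : ∀ᶠ t in nhds 0, t * g t ≤ 0 := by
    filter_upwards [hmin] with t ⟨hpd, hle⟩
    have hXu : IsUnit X.det := hX.det_pos.ne'.isUnit
    have hYu : IsUnit (X + t • H).det := hpd.det_pos.ne'.isUnit
    have hdiff : X⁻¹ - (X + t • H)⁻¹ = t • (X⁻¹ * H * (X + t • H)⁻¹) := by
      calc X⁻¹ - (X + t • H)⁻¹
          = X⁻¹ * ((X + t • H) - X) * (X + t • H)⁻¹ := by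
            rw [mul_sub, sub_mul, mul_assoc, mul_nonsing_inv _ hYu, nonsing_inv_mul _ hXu,
              mul_one, one_mul]
        _ = _ := by simp
    have : t * g t = (S * X⁻¹ * Sᵀ).trace - (S * (X + t • H)⁻¹ * Sᵀ).trace := by
      rw [← trace_sub, ← sub_mul, ← mul_sub, hdiff]
      simp [g]
    linarith
  have hg0 : g 0 = 0 := by
    refine le_antisymm ?_ ?_
    · refine le_of_tendsto (hg.tendsto.mono_left (nhdsWithin_le_nhds (s := Set.Ioi 0))) ?_
      filter_upwards [nhdsWithin_le_nhds hsign, self_mem_nhdsWithin] with t ht htpos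
      exact nonpos_of_mul_nonpos_right ht htpos
    · refine ge_of_tendsto (hg.tendsto.mono_left (nhdsWithin_le_nhds (s := Set.Iio 0))) ?_
      filter_upwards [nhdsWithin_le_nhds hsign, self_mem_nhdsWithin] with t ht htneg
      have htneg : t < 0 := htneg
      by_contra! hneg
      exact absurd ht (mul_pos_of_neg_of_neg htneg hneg).not_ge
  simpa [g] using hg0

theorem exists_posDef_diag_one_transpose_mul_self_eq {S : Matrix ι ι ℝ} (hS : IsUnit S.det) :
    ∃ (X : Matrix ι ι ℝ) (l : ι → ℝ), (X.PosDef ∧ ∀ i, X i i = 1) ∧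
      Sᵀ * S = X * diagonal l * X := by
  obtain ⟨X, ⟨hX, hdiag⟩, hmin⟩ := exists_posDef_diag_one_forall_trace_le hS
  have hXu : IsUnit X.det := hX.det_pos.ne'.isUnit
  set D := X⁻¹ * (Sᵀ * S) * X⁻¹ with hD
  have hDsymm : Dᵀ = D := by
    have hXt : X⁻¹ᵀ = X⁻¹ := by simpa using hX.inv.isHermitian.eq
    simp [hD, hXt, mul_assoc]
  have hoff : ∀ i j, i ≠ j → D i j = 0 := fun i j hij => by
    set H : Matrix ι ι ℝ := single i j 1 + single j i 1 with hH
    have hHdiag : ∀ k, H k k = 0 := fun k => by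
      simp only [hH, add_apply, single_apply]
      grind
    have hev : ∀ᶠ t : ℝ in nhds 0, (X + t • H).PosDef ∧
        (S * X⁻¹ * Sᵀ).trace ≤ (S * (X + t • H)⁻¹ * Sᵀ).trace := by
      have hlin : ContinuousAt (fun t : ℝ => X + t • H) 0 := by fun_prop
      have hnear : ∀ᶠ t : ℝ in nhds 0, (X + t • H).IsHermitian → (X + t • H).PosDef :=
        hlin.eventually (by simpa using hX.eventually_posDef)
      filter_upwards [hnear] with t ht
      have hXtH : (X + t • H).PosDef := ht (by
        have hHt : Hᴴ = H := by simp [hH, add_comm]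
        rw [IsHermitian, conjTranspose_add, conjTranspose_smul, hX.isHermitian.eq, hHt,
          star_trivial])
      exact ⟨hXtH, hmin _ hXtH fun k => by simp [hdiag, hHdiag]⟩
    have htr := trace_inv_mul_mul_inv_eq_zero hX hev
    have hji : D j i = D i j := congrFun₂ hDsymm i j
    rw [trace_conj_congr, ← hD, hH, mul_add, trace_add, trace_mul_single, trace_mul_single] at htr
    simp [hji] at htr
    linarith
  have hDdiag : diagonal D.diag = D := by
    ext i j
    rcases eq_or_ne i j with rfl | hij
    · simp
    · rw [diagonal_apply_ne _ hij, hoff i j hij]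
  refine ⟨X, D.diag, ⟨hX, hdiag⟩, ?_⟩
  rw [hDdiag, hD]
  simp only [mul_assoc, nonsing_inv_mul _ hXu, mul_one]
  rw [mul_nonsing_inv_cancel_left _ _ hXu]

theorem trace_diagonal_mul_of_diag_one {X : Matrix ι ι ℝ} (hX : ∀ i, X i i = 1) (l : ι → ℝ) :
    (diagonal l * X).trace = ∑ i, l i := by
  simp [trace, diagonal_mul, hX]

/-- Exact convexity gap of `Y ↦ tr (S Y⁻¹ Sᵀ)` at a solution of the Lagrangian equation. -/
theorem trace_gap_of_transpose_mul_self_eq {S X Y : Matrix ι ι ℝ} {l : ι → ℝ} (hX : X.PosDef)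
    (hXdiag : ∀ i, X i i = 1) (hY : Y.PosDef) (hYdiag : ∀ i, Y i i = 1)
    (hXS : Sᵀ * S = X * diagonal l * X) :
    (S * ((Y⁻¹ - X⁻¹) * Y * (Y⁻¹ - X⁻¹)) * Sᵀ).trace =
      (S * Y⁻¹ * Sᵀ).trace - (S * X⁻¹ * Sᵀ).trace := by
  have hXu : IsUnit X.det := hX.det_pos.ne'.isUnit
  have hYu : IsUnit Y.det := hY.det_pos.ne'.isUnit
  have hexpand : (Y⁻¹ - X⁻¹) * Y * (Y⁻¹ - X⁻¹) = Y⁻¹ - X⁻¹ - X⁻¹ + X⁻¹ * Y * X⁻¹ := by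
    simp only [sub_mul, mul_sub, mul_assoc, nonsing_inv_mul_cancel_left _ _ hYu,
      mul_nonsing_inv _ hYu, mul_one]
    abel
  have hcyc : ∀ Z : Matrix ι ι ℝ,
      (S * (X⁻¹ * Z * X⁻¹) * Sᵀ).trace = (diagonal l * Z).trace := fun Z => by
    have hcong : X⁻¹ * (Sᵀ * S) * X⁻¹ = diagonal l := by
      rw [hXS]
      simp only [mul_assoc, mul_nonsing_inv _ hXu, mul_one]
      rw [nonsing_inv_mul_cancel_left _ _ hXu]
    rw [trace_conj_congr, hcong]
  have hXX : X⁻¹ * X * X⁻¹ = X⁻¹ := by rw [nonsing_inv_mul _ hXu, one_mul]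
  have hXtr := hcyc X
  have hYtr := hcyc Y
  rw [hXX, trace_diagonal_mul_of_diag_one hXdiag] at hXtr
  rw [trace_diagonal_mul_of_diag_one hYdiag] at hYtr
  rw [hexpand]
  simp only [mul_add, mul_sub, add_mul, sub_mul, trace_add, trace_sub]
  linarith

theorem eq_of_transpose_mul_self_eq {S X Y : Matrix ι ι ℝ} {l m : ι → ℝ} (hS : IsUnit S.det)
    (hX : X.PosDef) (hXdiag : ∀ i, X i i = 1) (hXS : Sᵀ * S = X * diagonal l * X)
    (hY : Y.PosDef) (hYdiag : ∀ i, Y i i = 1) (hYS : Sᵀ * S = Y * diagonal m * Y) :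
    X = Y ∧ l = m := by
  have hXu : IsUnit X.det := hX.det_pos.ne'.isUnit
  have hYu : IsUnit Y.det := hY.det_pos.ne'.isUnit
  have hgapX := trace_gap_of_transpose_mul_self_eq hX hXdiag hY hYdiag hXS
  have hgapY := trace_gap_of_transpose_mul_self_eq hY hYdiag hX hXdiag hYS
  have hpsd : ∀ {Z W : Matrix ι ι ℝ}, Z.IsHermitian → W.PosDef →
      (S * (Z * W * Z) * Sᵀ).PosSemidef := fun {Z W} hZ hW => by
    have := hW.posSemidef.mul_mul_conjTranspose_same (S * Z)
    rw [conjTranspose_mul, hZ.eq] at this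
    simpa [mul_assoc] using this
  have hZX : (X⁻¹ - Y⁻¹).IsHermitian := hX.inv.isHermitian.sub hY.inv.isHermitian
  have hZY : (Y⁻¹ - X⁻¹).IsHermitian := hY.inv.isHermitian.sub hX.inv.isHermitian
  have hnnX := (hpsd hZX hX).trace_nonneg
  have hnnY := (hpsd hZY hY).trace_nonneg
  have hzero : S * ((Y⁻¹ - X⁻¹) * Y * (Y⁻¹ - X⁻¹)) * Sᵀ = 0 :=
    (hpsd hZY hY).trace_eq_zero_iff.mp (by linarith)
  have hSu : IsUnit S := (isUnit_iff_isUnit_det S).mpr hS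
  have hSt : IsUnit Sᵀ := (isUnit_iff_isUnit_det Sᵀ).mpr (by rwa [det_transpose])
  have hzero' : (Y⁻¹ - X⁻¹) * Y * (Y⁻¹ - X⁻¹) = 0 := by
    rwa [hSt.mul_left_eq_zero, hSu.mul_right_eq_zero] at hzero
  have hZ : Y⁻¹ - X⁻¹ = 0 := by
    refine funext fun i => ?_
    by_contra hrow
    have hpos := hY.dotProduct_mulVec_pos hrow
    have hentry : ((Y⁻¹ - X⁻¹) * Y * (Y⁻¹ - X⁻¹)ᵀ) i i = 0 := by
      rw [show (Y⁻¹ - X⁻¹)ᵀ = Y⁻¹ - X⁻¹ by simpa using hZY.eq, hzero', zero_apply]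
    rw [mul_assoc, mul_apply'] at hentry
    exact hpos.ne' hentry
  have hXY : X = Y := by
    rw [← nonsing_inv_nonsing_inv X hXu, ← nonsing_inv_nonsing_inv Y hYu, sub_eq_zero.mp hZ]
  subst hXY
  refine ⟨rfl, diagonal_injective ?_⟩
  have hXunit : IsUnit X := hX.isUnit
  exact hXunit.mul_left_cancel (hXunit.mul_right_cancel (hXS.symm.trans hYS))

end Matrix

/-- Corollary `uniqueness_lagrangian_zero_def`: for invertible `S` there is
exactly one pair `(X, λ)` with `X` symmetric positive definite with unit
diagonal and `λ ∈ ℝⁿ` such that `SᵀS = X·diag(λ)·X`. -/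
theorem lagrangian_equation_unique_solution (n : ℕ) (hn : 1 ≤ n)
    (S : Matrix (Fin n) (Fin n) ℝ) (hS : IsUnit S.det) :
    ∃! p : Matrix (Fin n) (Fin n) ℝ × (Fin n → ℝ),
      (p.1.PosDef ∧ ∀ i : Fin n, p.1 i i = 1) ∧
      Sᵀ * S = p.1 * Matrix.diagonal p.2 * p.1 := by
  obtain ⟨X, l, ⟨hX, hXdiag⟩, hXS⟩ := exists_posDef_diag_one_transpose_mul_self_eq hS
  refine ⟨(X, l), ⟨⟨hX, hXdiag⟩, hXS⟩, ?_⟩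
  rintro ⟨Y, m⟩ ⟨⟨hY, hYdiag⟩, hYS⟩
  obtain ⟨hYX, hml⟩ := eq_of_transpose_mul_self_eq hS hY hYdiag hYS hX hXdiag hXS
  exact Prod.ext hYX hml
end

section
/- Let n ≥ 1 and let S be an invertible n×n real matrix. Define φ on vectors v ∈ ℝⁿ with strictly positive entries by φ(v) = the vector of diagonal entries of the positive-semidefinite square root of diag(v)^{1/2}(SᵀS)diag(v)^{1/2}. Then φ has exactly one fixed point among vectors in ℝⁿ with all entries strictly positive: there exists a unique λ ∈ ℝⁿ with λᵢ > 0 for all i and φ(λ) = λ. -/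
open Matrix

section

open Filter Topology

open scoped MatrixOrder

variable {ι : Type*} [Fintype ι]

lemma Matrix.isClosed_setOf_posSemidef_s10 : IsClosed {M : Matrix ι ι ℝ | M.PosSemidef} := by
  simp only [posSemidef_iff_dotProduct_mulVec, Set.ofPred_and, Set.ofPred_forall]
  refine IsClosed.inter ?_ (isClosed_iInter fun x => ?_)
  · exact isClosed_eq (by fun_prop) continuous_id
  · exact isClosed_le continuous_const (by fun_prop)

lemma trace_gram_mul_conj_nonneg (S : Matrix ι ι ℝ) {Q Δ : Matrix ι ι ℝ} (hQ : Q.PosDef)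
    (hΔ : Δ.IsHermitian) : 0 ≤ (Sᵀ * S * (Δ * Q * Δ)).trace := by
  have h := ((hQ.posSemidef.conjTranspose_mul_mul_same Δ).mul_mul_conjTranspose_same S).trace_nonneg
  rw [hΔ.eq, trace_mul_comm, ← Matrix.mul_assoc] at h
  simpa using h

variable [DecidableEq ι]

lemma Matrix.PosSemidef.abs_apply_le_trace {M : Matrix ι ι ℝ} (hM : M.PosSemidef) (i j : ι) :
    |M i j| ≤ M.trace := by
  have hdiag (k : ι) : M k k ≤ M.trace :=
    Finset.single_le_sum (f := fun k => M k k) (fun k _ => hM.diag_nonneg) (Finset.mem_univ k)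
  have hsymm : M j i = M i j := by simpa using hM.1.apply i j
  have hadd := hM.dotProduct_mulVec_nonneg (Pi.single i 1 + Pi.single j 1)
  have hsub := hM.dotProduct_mulVec_nonneg (Pi.single i 1 - Pi.single j 1)
  simp only [star_trivial, mulVec_add, mulVec_sub, add_dotProduct, sub_dotProduct, dotProduct_add,
    dotProduct_sub, single_one_dotProduct, mulVec_single_one, col_apply] at hadd hsub
  have hi := hdiag i
  have hj := hdiag j
  rw [abs_le]
  constructor <;> linarith

lemma Matrix.isCompact_setOf_posSemidef_trace_le (c : ℝ) :
    IsCompact {M : Matrix ι ι ℝ | M.PosSemidef ∧ M.trace ≤ c} := by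
  have hbox : IsCompact (Set.univ.pi fun _ : ι => Set.univ.pi fun _ : ι => Set.Icc (-c) c) :=
    isCompact_univ_pi fun _ => isCompact_univ_pi fun _ => isCompact_Icc
  refine IsCompact.of_isClosed_subset (X := Matrix ι ι ℝ) hbox ?_ ?_
  · exact isClosed_setOf_posSemidef_s10.inter (isClosed_le continuous_id.matrix_trace continuous_const)
  · rintro M ⟨hM, hc⟩ i - j -
    exact abs_le.mp ((hM.abs_apply_le_trace i j).trans hc)

lemma Matrix.PosDef.one_add_smul {K : Matrix ι ι ℝ} (hK : K.IsHermitian) {t : ℝ}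
    (ht : 0 ≤ t) (htK : t * ∑ i, ∑ j, |K i j| < 1) : (1 + t • K).PosDef := by
  refine .of_dotProduct_mulVec_pos ?_ fun x hx => ?_
  · rw [IsHermitian, conjTranspose_add, conjTranspose_smul, hK.eq]
    simp
  have hpos : 0 < x ⬝ᵥ x := by simpa using dotProduct_star_self_pos_iff.mpr hx
  have hle (i : ι) : x i ^ 2 ≤ x ⬝ᵥ x := by
    rw [sq]
    exact Finset.single_le_sum (f := fun k => x k * x k)
      (fun k _ => mul_self_nonneg (x k)) (Finset.mem_univ i)
  have hbound : -((∑ i, ∑ j, |K i j|) * (x ⬝ᵥ x)) ≤ x ⬝ᵥ K *ᵥ x := by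
    simp only [dotProduct.eq_1 x (K *ᵥ x), mulVec, dotProduct.eq_1 (fun j => K _ j),
      Finset.mul_sum, Finset.sum_mul, ← Finset.sum_neg_distrib]
    refine Finset.sum_le_sum fun i _ => Finset.sum_le_sum fun j _ => ?_
    have hxx : |x i * x j| ≤ x ⬝ᵥ x := by
      have hi := hle i
      have hj := hle j
      rw [abs_le]
      constructor <;> nlinarith [sq_nonneg (x i + x j), sq_nonneg (x i - x j)]
    have habs := neg_abs_le (K i j * (x i * x j))
    rw [abs_mul] at habs
    have := mul_le_mul_of_nonneg_left hxx (abs_nonneg (K i j))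
    linarith
  have key : star x ⬝ᵥ (1 + t • K) *ᵥ x = x ⬝ᵥ x + t * (x ⬝ᵥ K *ᵥ x) := by
    simp [add_mulVec, smul_mulVec, dotProduct_add]
  rw [key]
  nlinarith [mul_le_mul_of_nonneg_left hbound ht]

/-- Positive definiteness is preserved under small symmetric perturbations. -/
lemma Matrix.PosDef.eventually_add_smul {P H : Matrix ι ι ℝ} (hP : P.PosDef)
    (hH : H.IsHermitian) : ∀ᶠ t : ℝ in 𝓝[>] 0, (P + t • H).PosDef := by
  obtain ⟨B, hB⟩ := CStarAlgebra.nonneg_iff_eq_star_mul_self.mp hP.posSemidef.nonneg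
  rw [star_eq_conjTranspose] at hB
  have hBu : IsUnit B.det := by
    have := (isUnit_iff_isUnit_det _).mp hP.isUnit
    rw [hB, det_mul] at this
    exact isUnit_of_mul_isUnit_right this
  set K := B⁻¹ᴴ * H * B⁻¹ with hKdef
  have hK : K.IsHermitian := isHermitian_conjTranspose_mul_mul _ hH
  have hlim : Tendsto (fun t : ℝ => t * ∑ i, ∑ j, |K i j|) (𝓝[>] 0) (𝓝 0) := by
    have : Continuous fun t : ℝ => t * ∑ i, ∑ j, |K i j| := by fun_prop
    simpa using (this.tendsto 0).mono_left nhdsWithin_le_nhds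
  filter_upwards [hlim.eventually_lt_const one_pos, self_mem_nhdsWithin] with t ht htpos
  have hPH : P + t • H = Bᴴ * (1 + t • K) * B := by
    have h1 : Bᴴ * B⁻¹ᴴ = 1 := by
      rw [← conjTranspose_mul, nonsing_inv_mul _ hBu, conjTranspose_one]
    have h2 : Bᴴ * K * B = H := by
      calc Bᴴ * K * B = (Bᴴ * B⁻¹ᴴ) * H * (B⁻¹ * B) := by simp only [hKdef, Matrix.mul_assoc]
        _ = H := by rw [h1, nonsing_inv_mul _ hBu, Matrix.one_mul, Matrix.mul_one]
    rw [Matrix.mul_add, Matrix.add_mul, Matrix.mul_one, Matrix.mul_smul, Matrix.smul_mul, h2, ← hB]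
  rw [hPH]
  exact (PosDef.one_add_smul hK (le_of_lt htpos) ht).conjTranspose_mul_mul_same
    (mulVec_injective_iff_isUnit.mpr ((isUnit_iff_isUnit_det _).mpr hBu))

/-- The function `P ↦ tr (SᵀS P⁻¹)` attains its minimum on the set of positive definite matrices
with unit diagonal. -/
lemma exists_posDef_minimizing_trace_mul_inv (S : Matrix ι ι ℝ) (hS : IsUnit S.det) :
    ∃ P : Matrix ι ι ℝ, P.PosDef ∧ (∀ i, P i i = 1) ∧
      ∀ Q : Matrix ι ι ℝ, Q.PosDef → (∀ i, Q i i = 1) →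
        (Sᵀ * S * P⁻¹).trace ≤ (Sᵀ * S * Q⁻¹).trace := by
  set c := (S * Sᵀ).trace with hc
  set E : Set (Matrix ι ι ℝ × Matrix ι ι ℝ) :=
    ({M | M.PosSemidef ∧ M.trace ≤ (Fintype.card ι : ℝ)} ×ˢ {M | M.PosSemidef ∧ M.trace ≤ c}) ∩
      {p | (∀ i, p.1 i i = 1) ∧ p.1 * (S⁻¹ * p.2 * S⁻¹ᵀ) = 1} with hE
  have hcompact : IsCompact E := by
    refine ((isCompact_setOf_posSemidef_trace_le _).prod
      (isCompact_setOf_posSemidef_trace_le _)).inter_right ?_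
    simp only [Set.ofPred_and, Set.ofPred_forall]
    refine IsClosed.inter (isClosed_iInter fun i => ?_) ?_
    · exact isClosed_eq (continuous_fst.matrix_elem i i) continuous_const
    · exact isClosed_eq (by fun_prop) continuous_const
  have hST : Sᵀ * S⁻¹ᵀ = 1 := by
    rw [← transpose_mul, nonsing_inv_mul _ hS, transpose_one]
  have htrace (X : Matrix ι ι ℝ) : (S * X * Sᵀ).trace = (Sᵀ * S * X).trace := by
    rw [trace_mul_comm, Matrix.mul_assoc]
  have hmem (Q : Matrix ι ι ℝ) (hQ : Q.PosDef) (hQ1 : ∀ i, Q i i = 1)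
      (hQc : (S * Q⁻¹ * Sᵀ).trace ≤ c) : (Q, S * Q⁻¹ * Sᵀ) ∈ E := by
    have hQu := (isUnit_iff_isUnit_det _).mp hQ.isUnit
    refine ⟨⟨⟨hQ.posSemidef, by simp [trace, hQ1]⟩, ?_, hQc⟩, hQ1, ?_⟩
    · simpa using hQ.inv.posSemidef.mul_mul_conjTranspose_same S
    · calc Q * (S⁻¹ * (S * Q⁻¹ * Sᵀ) * S⁻¹ᵀ) = Q * ((S⁻¹ * S) * Q⁻¹ * (Sᵀ * S⁻¹ᵀ)) := by
            simp only [Matrix.mul_assoc]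
        _ = 1 := by
            rw [nonsing_inv_mul _ hS, hST, Matrix.one_mul, Matrix.mul_one, mul_nonsing_inv _ hQu]
  have hone : ((1 : Matrix ι ι ℝ), S * (1 : Matrix ι ι ℝ)⁻¹ * Sᵀ) ∈ E :=
    hmem 1 PosDef.one (by simp) (by simp [hc])
  obtain ⟨⟨P, Y⟩, hPY, hmin⟩ := hcompact.exists_isMinOn ⟨_, hone⟩
    (f := fun p => p.2.trace) (Continuous.continuousOn (by fun_prop))
  obtain ⟨⟨⟨hP, -⟩, -, hYc⟩, hP1, hPinv⟩ := hPY
  simp only at hP hYc hP1 hPinv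
  have hPX : P⁻¹ = S⁻¹ * Y * S⁻¹ᵀ := inv_eq_right_inv hPinv
  have hY : Y = S * P⁻¹ * Sᵀ := by
    have hTS : S⁻¹ᵀ * Sᵀ = 1 := by
      rw [← transpose_mul, mul_nonsing_inv _ hS, transpose_one]
    rw [hPX]
    calc Y = (S * S⁻¹) * Y * (S⁻¹ᵀ * Sᵀ) := by
          rw [hTS, mul_nonsing_inv _ hS, Matrix.one_mul, Matrix.mul_one]
      _ = S * (S⁻¹ * Y * S⁻¹ᵀ) * Sᵀ := by simp only [Matrix.mul_assoc]
  refine ⟨P, hP.posDef_iff_isUnit.mpr (.of_mul_eq_one _ hPinv), hP1, fun Q hQ hQ1 => ?_⟩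
  rw [← htrace, ← htrace, ← hY]
  rcases le_total (S * Q⁻¹ * Sᵀ).trace c with h | h
  · exact hmin (hmem Q hQ hQ1 h)
  · exact hYc.trans h

/-- First-order optimality: at a minimizer `P` of `tr (A P⁻¹)` among positive definite matrices
with unit diagonal, the gradient `P⁻¹ A P⁻¹` is diagonal. -/
lemma isDiag_inv_mul_mul_inv_of_minimizer {A P : Matrix ι ι ℝ} (hA : A.IsHermitian)
    (hP : P.PosDef) (hP1 : ∀ i, P i i = 1)
    (hmin : ∀ Q : Matrix ι ι ℝ, Q.PosDef → (∀ i, Q i i = 1) →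
      (A * P⁻¹).trace ≤ (A * Q⁻¹).trace) :
    (P⁻¹ * A * P⁻¹).IsDiag := by
  set W := P⁻¹ * A * P⁻¹ with hW
  have hWh : W.IsHermitian := by
    have := isHermitian_mul_mul_conjTranspose P⁻¹ hA
    rwa [hP.inv.1.eq] at this
  set H : Matrix ι ι ℝ := W - diagonal W.diag with hH
  have hHh : H.IsHermitian := hWh.sub (isHermitian_diagonal _)
  have hHd (i : ι) : H i i = 0 := by simp [hH]
  have hPdet : P.det ≠ 0 := ((isUnit_iff_isUnit_det _).mp hP.isUnit).ne_zero
  have hlim : Tendsto (fun t : ℝ => (A * ((P + t • H)⁻¹ * H * P⁻¹)).trace) (𝓝[>] 0)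
      (𝓝 (A * (P⁻¹ * H * P⁻¹)).trace) := by
    have hinv : ContinuousAt (Inv.inv : Matrix ι ι ℝ → Matrix ι ι ℝ) P := by
      refine continuousAt_matrix_inv P ?_
      rw [Ring.inverse_eq_inv']
      exact continuousAt_inv₀ hPdet
    have hpath : Tendsto (fun t : ℝ => P + t • H) (𝓝[>] 0) (𝓝 P) := by
      have : Continuous fun t : ℝ => P + t • H := by fun_prop
      simpa using (this.tendsto 0).mono_left nhdsWithin_le_nhds
    have hcont : Continuous fun X : Matrix ι ι ℝ => (A * (X * H * P⁻¹)).trace := by fun_prop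
    exact (hcont.tendsto P⁻¹).comp (hinv.tendsto.comp hpath)
  have hle : (A * (P⁻¹ * H * P⁻¹)).trace ≤ 0 := by
    refine le_of_tendsto hlim ?_
    filter_upwards [hP.eventually_add_smul hHh, self_mem_nhdsWithin] with t ht htpos
    have hm := hmin _ ht fun i => by simp [hP1, hHd]
    have hdiff : P⁻¹ - (P + t • H)⁻¹ = t • ((P + t • H)⁻¹ * H * P⁻¹) := by
      rw [← neg_sub, inv_sub_inv (iff_of_true ht.isUnit hP.isUnit)]
      simp
    have htr : (A * P⁻¹).trace - (A * (P + t • H)⁻¹).trace =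
        t * (A * ((P + t • H)⁻¹ * H * P⁻¹)).trace := by
      rw [← trace_sub, ← Matrix.mul_sub, hdiff, Matrix.mul_smul, trace_smul, smul_eq_mul]
    by_contra! hcon
    have := mul_pos (Set.mem_Ioi.mp htpos) hcon
    linarith
  have hWH : (A * (P⁻¹ * H * P⁻¹)).trace = (W * H).trace := by
    rw [← Matrix.mul_assoc, trace_mul_comm, hW]
    simp only [Matrix.mul_assoc]
  have hDH : (diagonal W.diag * H).trace = 0 := by
    simp [trace, diagonal_mul, hHd]
  have hHH : (Hᴴ * H).trace = 0 := by
    refine le_antisymm ?_ (posSemidef_conjTranspose_mul_self H).trace_nonneg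
    rw [hHh.eq]
    nth_rewrite 1 [hH]
    rw [Matrix.sub_mul, trace_sub, hDH, sub_zero, ← hWH]
    exact hle
  have hH0 : H = 0 := trace_conjTranspose_mul_self_eq_zero_iff.mp hHH
  rw [sub_eq_zero.mp hH0]
  exact isDiag_diagonal _

lemma eq_zero_of_trace_gram_mul_conj_eq_zero {S : Matrix ι ι ℝ} (hS : IsUnit S.det)
    {Q Δ : Matrix ι ι ℝ} (hQ : Q.PosDef) (hΔ : Δ.IsHermitian)
    (h : (Sᵀ * S * (Δ * Q * Δ)).trace = 0) : Δ = 0 := by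
  have hpsd := (hQ.posSemidef.conjTranspose_mul_mul_same Δ).mul_mul_conjTranspose_same S
  have htr : (S * (Δᴴ * Q * Δ) * Sᴴ).trace = 0 := by
    rw [hΔ.eq, trace_mul_comm, ← Matrix.mul_assoc]
    simpa using h
  have h0 := hpsd.trace_eq_zero_iff.mp htr
  have hSu : IsUnit S := (isUnit_iff_isUnit_det _).mpr hS
  have hSt : IsUnit Sᴴ := hSu.star
  rw [hSt.mul_left_eq_zero, hSu.mul_right_eq_zero] at h0
  by_contra hne
  obtain ⟨x, hx⟩ : ∃ x, Δ *ᵥ x ≠ 0 := by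
    by_contra! hall
    exact hne (ext_of_mulVec_single fun i => by rw [hall, zero_mulVec])
  have hpos := hQ.dotProduct_mulVec_pos hx
  have : star (Δ *ᵥ x) ⬝ᵥ Q *ᵥ (Δ *ᵥ x) = star x ⬝ᵥ (Δᴴ * Q * Δ) *ᵥ x := by
    simp only [star_mulVec, dotProduct_mulVec, vecMul_vecMul]
  rw [this, h0] at hpos
  simp at hpos

lemma trace_mul_conj_inv_sub_inv {A P Q : Matrix ι ι ℝ} {d e : ι → ℝ} (hP : P.PosDef)
    (hQ : Q.PosDef) (hP1 : ∀ i, P i i = 1) (hQ1 : ∀ i, Q i i = 1)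
    (hPA : P * diagonal d * P = A) (hQA : Q * diagonal e * Q = A) :
    (A * ((P⁻¹ - Q⁻¹) * Q * (P⁻¹ - Q⁻¹))).trace = ∑ i, e i - ∑ i, d i := by
  have hPu := (isUnit_iff_isUnit_det _).mp hP.isUnit
  have hQu := (isUnit_iff_isUnit_det _).mp hQ.isUnit
  have hexp : (P⁻¹ - Q⁻¹) * Q * (P⁻¹ - Q⁻¹) = P⁻¹ * Q * P⁻¹ - P⁻¹ - P⁻¹ + Q⁻¹ := by
    simp only [Matrix.sub_mul, Matrix.mul_sub, nonsing_inv_mul _ hQu, Matrix.one_mul,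
      Matrix.mul_assoc, mul_nonsing_inv _ hQu, Matrix.mul_one]
    abel
  have hdiag (M : Matrix ι ι ℝ) (hM : ∀ i, M i i = 1) (v : ι → ℝ) :
      (M * diagonal v).trace = ∑ i, v i := by
    simp [trace, mul_diagonal, hM]
  have h1 : (A * P⁻¹).trace = ∑ i, d i := by
    rw [← hPA, mul_nonsing_inv_cancel_right _ _ hPu, hdiag P hP1]
  have h2 : (A * Q⁻¹).trace = ∑ i, e i := by
    rw [← hQA, mul_nonsing_inv_cancel_right _ _ hQu, hdiag Q hQ1]
  have h3 : (A * (P⁻¹ * Q * P⁻¹)).trace = ∑ i, d i := by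
    rw [← hPA, ← Matrix.mul_assoc, ← Matrix.mul_assoc, mul_nonsing_inv_cancel_right _ _ hPu,
      Matrix.mul_assoc, trace_mul_comm, Matrix.mul_assoc, nonsing_inv_mul_cancel_left _ _ hPu,
      hdiag Q hQ1]
  rw [hexp, Matrix.mul_add, Matrix.mul_sub, Matrix.mul_sub, trace_add, trace_sub, trace_sub,
    h1, h2, h3]
  ring

/-- A factorization `SᵀS = P D P` with `P` positive definite of unit diagonal and `D` diagonal
determines `D`. -/
lemma eq_of_unit_diag_factorizations {S P Q : Matrix ι ι ℝ} (hS : IsUnit S.det) {d e : ι → ℝ}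
    (hP : P.PosDef) (hQ : Q.PosDef) (hP1 : ∀ i, P i i = 1) (hQ1 : ∀ i, Q i i = 1)
    (hPA : P * diagonal d * P = Sᵀ * S) (hQA : Q * diagonal e * Q = Sᵀ * S) : d = e := by
  have hPQ : (P⁻¹ - Q⁻¹).IsHermitian := hP.inv.1.sub hQ.inv.1
  have hQP : (Q⁻¹ - P⁻¹).IsHermitian := hQ.inv.1.sub hP.inv.1
  have h1 := trace_mul_conj_inv_sub_inv hP hQ hP1 hQ1 hPA hQA
  have h2 := trace_mul_conj_inv_sub_inv hQ hP hQ1 hP1 hQA hPA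
  have h3 := trace_gram_mul_conj_nonneg S hQ hPQ
  have h4 := trace_gram_mul_conj_nonneg S hP hQP
  have h0 := eq_zero_of_trace_gram_mul_conj_eq_zero hS hQ hPQ (by linarith)
  have hinv : P⁻¹ = Q⁻¹ := sub_eq_zero.mp h0
  have hPu := (isUnit_iff_isUnit_det _).mp hP.isUnit
  have hQu := (isUnit_iff_isUnit_det _).mp hQ.isUnit
  have hEq : P = Q := by
    rw [← nonsing_inv_nonsing_inv P hPu, hinv, nonsing_inv_nonsing_inv Q hQu]
  subst hEq
  exact diagonal_injective (hP.isUnit.mul_left_cancel (hP.isUnit.mul_right_cancel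
    (hPA.trans hQA.symm)))

lemma diagonal_sqrt_mul_self {v : ι → ℝ} (hv : ∀ i, 0 < v i) :
    diagonal (fun i => √(v i)) * diagonal (fun i => √(v i)) = diagonal v := by
  simp [diagonal_mul_diagonal, Real.mul_self_sqrt (hv _).le]

/-- A positive fixed point of `φ` yields a factorization `SᵀS = P D P` with `P` positive definite
of unit diagonal. -/
lemma exists_unit_diag_factorization {S R : Matrix ι ι ℝ} (hS : IsUnit S.det) {v : ι → ℝ}
    (hv : ∀ i, 0 < v i) (hR : R.PosSemidef)
    (hRR : R * R = diagonal (fun i => √(v i)) * (Sᵀ * S) * diagonal (fun i => √(v i)))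
    (hRv : ∀ i, R i i = v i) :
    ∃ P : Matrix ι ι ℝ, P.PosDef ∧ (∀ i, P i i = 1) ∧ P * diagonal v * P = Sᵀ * S := by
  have hne (i : ι) : √(v i) ≠ 0 := (Real.sqrt_pos.mpr (hv i)).ne'
  set T : Matrix ι ι ℝ := diagonal fun i => √(v i) with hT
  set U : Matrix ι ι ℝ := diagonal fun i => (√(v i))⁻¹ with hU
  have hUT : U * T = 1 := by simp [hT, hU, diagonal_mul_diagonal, hne]
  have hTU : T * U = 1 := by simp [hT, hU, diagonal_mul_diagonal, hne]
  have hPA : U * R * U * diagonal v * (U * R * U) = Sᵀ * S := by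
    calc U * R * U * diagonal v * (U * R * U)
        = U * R * (U * T) * (T * U) * R * U := by
          rw [← diagonal_sqrt_mul_self hv]
          simp only [Matrix.mul_assoc, ← hT]
      _ = U * (R * R) * U := by simp only [hUT, hTU, Matrix.mul_one, Matrix.mul_assoc]
      _ = (U * T) * (Sᵀ * S) * (T * U) := by rw [hRR]; simp only [Matrix.mul_assoc]
      _ = Sᵀ * S := by rw [hUT, hTU, Matrix.one_mul, Matrix.mul_one]
  have hpsd : (U * R * U).PosSemidef := by
    have := hR.mul_mul_conjTranspose_same U
    rwa [(isHermitian_diagonal _ : U.IsHermitian).eq] at this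
  refine ⟨U * R * U, ?_, fun i => ?_, hPA⟩
  · rw [hpsd.posDef_iff_det_ne_zero]
    intro h0
    have := congrArg det hPA
    rw [det_mul, h0, mul_zero, det_mul, det_transpose] at this
    exact mul_ne_zero hS.ne_zero hS.ne_zero this.symm
  · rw [hU, mul_diagonal, diagonal_mul, hRv]
    have := hne i
    field_simp
    exact (Real.sq_sqrt (hv i).le).symm

end

/-- Corollary `uniqueness_phi_fixed_point`: the map
`φ(v) = diag-part((diag(v)^{1/2}(SᵀS)diag(v)^{1/2})^{1/2})` has exactly one
fixed point among vectors with all entries strictly positive.  (Here the PSD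
square root is characterized as the PSD matrix `R` with
`R·R = diag(√v)(SᵀS)diag(√v)`.) -/
theorem phi_unique_fixed_point (n : ℕ) (hn : 1 ≤ n)
    (S : Matrix (Fin n) (Fin n) ℝ) (hS : IsUnit S.det) :
    ∃! lam : Fin n → ℝ,
      (∀ i, 0 < lam i) ∧
      ∃ R : Matrix (Fin n) (Fin n) ℝ, R.PosSemidef ∧
        R * R = Matrix.diagonal (fun i => Real.sqrt (lam i)) * (Sᵀ * S) *
          Matrix.diagonal (fun i => Real.sqrt (lam i)) ∧
        (∀ i : Fin n, R i i = lam i) := by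
  obtain ⟨P, hP, hP1, hmin⟩ := exists_posDef_minimizing_trace_mul_inv S hS
  have hA : (Sᵀ * S).PosDef := by
    have hpsd : (Sᵀ * S).PosSemidef := by simpa using posSemidef_conjTranspose_mul_self S
    rw [hpsd.posDef_iff_det_ne_zero, det_mul, det_transpose]
    exact mul_ne_zero hS.ne_zero hS.ne_zero
  have hPu := (isUnit_iff_isUnit_det _).mp hP.isUnit
  have hdiag := isDiag_inv_mul_mul_inv_of_minimizer hA.1 hP hP1 hmin
  have hWpos : (P⁻¹ * (Sᵀ * S) * P⁻¹).PosDef := by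
    have := hA.conjTranspose_mul_mul_same (mulVec_injective_iff_isUnit.mpr hP.inv.isUnit)
    rwa [hP.inv.1.eq] at this
  set lam : Fin n → ℝ := (P⁻¹ * (Sᵀ * S) * P⁻¹).diag with hlam
  have hpos (i : Fin n) : 0 < lam i := hWpos.diag_pos
  have hfac : P * diagonal lam * P = Sᵀ * S := by
    rw [hlam, hdiag.diagonal_diag, Matrix.mul_assoc, nonsing_inv_mul_cancel_right _ _ hPu,
      mul_nonsing_inv_cancel_left _ _ hPu]
  refine ⟨lam, ⟨hpos, diagonal (fun i => √(lam i)) * P * diagonal (fun i => √(lam i)),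
    ?_, ?_, fun i => ?_⟩, ?_⟩
  · have := hP.posSemidef.mul_mul_conjTranspose_same (diagonal fun i => √(lam i))
    rwa [(isHermitian_diagonal _ : (diagonal fun i => √(lam i)).IsHermitian).eq] at this
  · rw [← hfac, ← diagonal_sqrt_mul_self hpos]
    simp only [Matrix.mul_assoc]
  · rw [mul_diagonal, diagonal_mul, hP1, mul_one, Real.mul_self_sqrt (hpos i).le]
  · rintro mu ⟨hmu, R, hR, hRR, hRmu⟩
    obtain ⟨Q, hQ, hQ1, hQA⟩ := exists_unit_diag_factorization hS hmu hR hRR hRmu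
    exact eq_of_unit_diag_factorizations hS hQ hP hQ1 hP1 hQA hfac
end

section
/- Let n ≥ 1 and let S be the n×n prefix-sum matrix with entries S_{ij} = 1 if j ≤ i and 0 otherwise. Then for all n×n real matrices A and B with A·B = S, the loss L(A,B) = (max_i ∑_j B_{ji}²)·(∑_{i,j} A_{ij}²) satisfies L(A,B) ≥ n·(log n)² / (4π²), where log is the natural logarithm. In particular, any matrix-factorization-based DP mechanism for prefix sums has root-mean expected squared error at least of order (log n)·√n. -/
open Matrix Real

lemma sin_int_mul_two_pi (d : ℤ) : sin (d * (2 * π)) = 0 := by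
  have := Real.sin_int_mul_pi (d * 2)
  push_cast at this
  rwa [← mul_assoc]

lemma integral_cos_int_mul (d : ℤ) :
    ∫ t in (0 : ℝ)..2 * π, cos (d * t) = if d = 0 then 2 * π else 0 := by
  split_ifs with h
  · simp [h]
  · have hd : (d : ℝ) ≠ 0 := by exact_mod_cast h
    rw [intervalIntegral.integral_comp_mul_left (fun t => cos t) hd, integral_cos]
    simp [sin_int_mul_two_pi]

/-- The Fourier coefficients of the sawtooth `π - t` on `[0, 2π]`. At `d = 0` both sides vanish. -/
lemma integral_sawtooth_mul_sin (d : ℤ) :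
    ∫ t in (0 : ℝ)..2 * π, (π - t) * sin (d * t) = 2 * π * (d : ℝ)⁻¹ := by
  by_cases h : d = 0
  · simp [h]
  have hd : (d : ℝ) ≠ 0 := by exact_mod_cast h
  have hderiv : ∀ t ∈ Set.uIcc (0 : ℝ) (2 * π),
      HasDerivAt (fun t : ℝ => -(π - t) * cos (d * t) / d - sin (d * t) / d ^ 2)
        ((π - t) * sin (d * t)) t := by
    intro t _
    have hlin : HasDerivAt (fun t : ℝ => (d : ℝ) * t) d t := by
      simpa using (hasDerivAt_id t).const_mul (d : ℝ)
    have hsub : HasDerivAt (fun t : ℝ => -(π - t)) 1 t := by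
      simpa using ((hasDerivAt_id' t).const_sub π).fun_neg
    refine (((hsub.fun_mul hlin.cos).div_const (d : ℝ)).fun_sub
      (hlin.sin.div_const ((d : ℝ) ^ 2))).congr_deriv ?_
    field_simp
    ring
  rw [intervalIntegral.integral_eq_sub_of_hasDerivAt hderiv
    (Continuous.intervalIntegrable (by fun_prop) _ _), Real.cos_int_mul_two_pi]
  simp only [sin_int_mul_two_pi, mul_zero, sin_zero, cos_zero, zero_div, sub_zero, mul_one]
  field_simp
  ring

/-- Parseval's identity for a real trigonometric polynomial. -/
lemma integral_sq_trig_sum {n : ℕ} (x : Fin n → ℝ) :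
    ∫ t in (0 : ℝ)..2 * π, ((∑ i : Fin n, x i * sin ((i : ℕ) * t)) ^ 2 +
      (∑ i : Fin n, x i * cos ((i : ℕ) * t)) ^ 2) = 2 * π * ∑ i, x i ^ 2 := by
  have hpt : ∀ t : ℝ, (∑ i : Fin n, x i * sin ((i : ℕ) * t)) ^ 2 +
      (∑ i : Fin n, x i * cos ((i : ℕ) * t)) ^ 2 =
      ∑ i : Fin n, ∑ j : Fin n, x i * x j * cos ((((i : ℕ) : ℤ) - ((j : ℕ) : ℤ) : ℤ) * t) := by
    intro t
    simp only [sq, Finset.sum_mul_sum, ← Finset.sum_add_distrib]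
    refine Finset.sum_congr rfl fun i _ => Finset.sum_congr rfl fun j _ => ?_
    push_cast
    rw [sub_mul, cos_sub]
    ring
  simp only [hpt]
  rw [intervalIntegral.integral_finsetSum
    fun i _ => Continuous.intervalIntegrable (by fun_prop) _ _, Finset.mul_sum]
  refine Finset.sum_congr rfl fun i _ => ?_
  rw [intervalIntegral.integral_finsetSum
    fun j _ => Continuous.intervalIntegrable (by fun_prop) _ _]
  simp only [intervalIntegral.integral_const_mul, integral_cos_int_mul]
  rw [Finset.sum_eq_single i]
  · simp
    ring
  · intro j _ hj
    have : ((i : ℕ) : ℤ) - ((j : ℕ) : ℤ) ≠ 0 := by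
      have := Fin.val_ne_of_ne hj
      omega
    simp [this]
  · simp

/-- Hilbert's inequality for the kernel `1 / (i - j)`, with constant `π`, in additive form. -/
lemma two_mul_hilbert_sum_le {n : ℕ} (x y : Fin n → ℝ) :
    2 * ∑ i : Fin n, ∑ j : Fin n, x i * y j * (((i : ℕ) : ℝ) - ((j : ℕ) : ℝ))⁻¹ ≤
      π ^ 2 * ∑ i, x i ^ 2 + ∑ j, y j ^ 2 := by
  set Sx : ℝ → ℝ := fun t => ∑ i : Fin n, x i * sin ((i : ℕ) * t) with hSx
  set Cx : ℝ → ℝ := fun t => ∑ i : Fin n, x i * cos ((i : ℕ) * t) with hCx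
  set Sy : ℝ → ℝ := fun t => ∑ i : Fin n, y i * sin ((i : ℕ) * t) with hSy
  set Cy : ℝ → ℝ := fun t => ∑ i : Fin n, y i * cos ((i : ℕ) * t) with hCy
  have hpt : ∀ t : ℝ, (π - t) * (Sx t * Cy t - Cx t * Sy t) =
      ∑ i : Fin n, ∑ j : Fin n,
        x i * y j * ((π - t) * sin ((((i : ℕ) : ℤ) - ((j : ℕ) : ℤ) : ℤ) * t)) := by
    intro t
    simp only [hSx, hCx, hSy, hCy, Finset.sum_mul_sum]
    rw [← Finset.sum_sub_distrib, Finset.mul_sum]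
    refine Finset.sum_congr rfl fun i _ => ?_
    rw [← Finset.sum_sub_distrib, Finset.mul_sum]
    refine Finset.sum_congr rfl fun j _ => ?_
    push_cast
    rw [sub_mul _ _ t, sin_sub]
    ring
  have hbilin : ∫ t in (0 : ℝ)..2 * π, (π - t) * (Sx t * Cy t - Cx t * Sy t) =
      2 * π * ∑ i : Fin n, ∑ j : Fin n, x i * y j * (((i : ℕ) : ℝ) - ((j : ℕ) : ℝ))⁻¹ := by
    simp only [hpt]
    rw [intervalIntegral.integral_finsetSum
      fun i _ => Continuous.intervalIntegrable (by fun_prop) _ _, Finset.mul_sum]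
    refine Finset.sum_congr rfl fun i _ => ?_
    rw [intervalIntegral.integral_finsetSum
      fun j _ => Continuous.intervalIntegrable (by fun_prop) _ _, Finset.mul_sum]
    refine Finset.sum_congr rfl fun j _ => ?_
    rw [intervalIntegral.integral_const_mul, integral_sawtooth_mul_sin]
    push_cast
    ring
  have hle : ∫ t in (0 : ℝ)..2 * π, 2 * ((π - t) * (Sx t * Cy t - Cx t * Sy t)) ≤
      ∫ t in (0 : ℝ)..2 * π, (π ^ 2 * (Sx t ^ 2 + Cx t ^ 2) + (Sy t ^ 2 + Cy t ^ 2)) := by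
    refine intervalIntegral.integral_mono_on (by positivity)
      (Continuous.intervalIntegrable (by fun_prop) _ _)
      (Continuous.intervalIntegrable (by fun_prop) _ _) fun t ht => ?_
    have hsq : (π - t) ^ 2 ≤ π ^ 2 := by nlinarith [ht.1, ht.2]
    nlinarith [sq_nonneg ((π - t) * Sx t - Cy t), sq_nonneg ((π - t) * Cx t + Sy t),
      mul_le_mul_of_nonneg_right hsq (add_nonneg (sq_nonneg (Sx t)) (sq_nonneg (Cx t)))]
  rw [intervalIntegral.integral_const_mul, hbilin, intervalIntegral.integral_add
    (Continuous.intervalIntegrable (by fun_prop) _ _)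
    (Continuous.intervalIntegrable (by fun_prop) _ _), intervalIntegral.integral_const_mul,
    integral_sq_trig_sum, integral_sq_trig_sum] at hle
  refine le_of_mul_le_mul_left ?_ Real.two_pi_pos
  linarith

/-- Pairing a product `A * B` with the Hilbert kernel is bounded by `π ‖A‖_F ‖B‖_F`. -/
lemma sq_hilbert_pairing_mul_le {n : ℕ} (A B : Matrix (Fin n) (Fin n) ℝ) :
    (∑ i : Fin n, ∑ j : Fin n, (A * B) i j * (((i : ℕ) : ℝ) - ((j : ℕ) : ℝ))⁻¹) ^ 2 ≤
      π ^ 2 * (∑ i, ∑ j, A i j ^ 2) * ∑ i, ∑ j, B i j ^ 2 := by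
  set T := ∑ i : Fin n, ∑ j : Fin n, (A * B) i j * (((i : ℕ) : ℝ) - ((j : ℕ) : ℝ))⁻¹ with hT
  have hTsum : T = ∑ k, ∑ i : Fin n, ∑ j : Fin n,
      A i k * B k j * (((i : ℕ) : ℝ) - ((j : ℕ) : ℝ))⁻¹ := by
    simp only [hT, Matrix.mul_apply, Finset.sum_mul]
    conv_rhs => rw [Finset.sum_comm]
    exact Finset.sum_congr rfl fun i _ => Finset.sum_comm
  have hquad : ∀ r : ℝ, 0 ≤ (π ^ 2 * ∑ i, ∑ j, A i j ^ 2) * (r * r) + (-2 * T) * r +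
      ∑ i, ∑ j, B i j ^ 2 := by
    intro r
    have hsum := Finset.sum_le_sum fun k (_ : k ∈ Finset.univ) =>
      two_mul_hilbert_sum_le (fun i => r * A i k) (fun j => B k j)
    simp only [mul_pow, mul_assoc r, ← Finset.mul_sum, Finset.sum_add_distrib] at hsum
    rw [← hTsum, Finset.sum_comm (f := fun k i => A i k ^ 2)] at hsum
    linarith
  have := discrim_le_zero hquad
  rw [discrim] at this
  linarith

/-- The pairing of the prefix-sum matrix with the Hilbert kernel is at least `n log n / 2`. -/
lemma half_mul_log_le_prefix_sum_pairing (n : ℕ) :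
    (n : ℝ) * log n / 2 ≤ ∑ i ∈ Finset.range n, ∑ j ∈ Finset.range (i + 1),
      ((i : ℝ) - (j : ℝ))⁻¹ := by
  induction n with
  | zero => simp
  | succ n ih =>
    rw [Finset.sum_range_succ]
    rcases Nat.eq_zero_or_pos n with rfl | hn
    · simp
    have hharm : ∑ j ∈ Finset.range (n + 1), ((n : ℝ) - (j : ℝ))⁻¹ = (harmonic n : ℝ) := by
      rw [Finset.sum_range_succ, ← Finset.sum_range_reflect, harmonic]
      push_cast
      simp only [sub_self, _root_.inv_zero, add_zero]
      refine Finset.sum_congr rfl fun j hj => ?_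
      have := Finset.mem_range.mp hj
      rw [Nat.sub_sub, Nat.cast_sub (by omega)]
      push_cast
      ring_nf
    have hlog : log ((n : ℝ) + 1) ≤ harmonic n := by
      exact_mod_cast log_add_one_le_harmonic n
    have hone : (1 : ℝ) ≤ harmonic n := by
      have : (1 : ℚ) ≤ harmonic n := by
        obtain ⟨m, rfl⟩ := Nat.exists_eq_succ_of_ne_zero hn.ne'
        rw [harmonic, Finset.sum_range_succ']
        simpa using Finset.sum_nonneg fun i _ => by positivity
      exact_mod_cast this
    have hn' : (0 : ℝ) < n := by exact_mod_cast hn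
    have hstep : n * (log ((n : ℝ) + 1) - log n) ≤ 1 := by
      rw [← log_div (by positivity) (by positivity)]
      have := log_le_sub_one_of_pos (x := ((n : ℝ) + 1) / n) (by positivity)
      calc (n : ℝ) * log ((n + 1) / n) ≤ n * ((n + 1) / n - 1) := by gcongr
        _ = 1 := by field_simp; ring
    rw [hharm]
    push_cast
    linarith

/-- The pairing of the prefix-sum matrix with the Hilbert kernel, as a sum over `range`. -/
lemma hilbert_pairing_prefix_sum (n : ℕ) :
    ∑ i : Fin n, ∑ j : Fin n,
      (if j ≤ i then (1 : ℝ) else 0) * (((i : ℕ) : ℝ) - ((j : ℕ) : ℝ))⁻¹ =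
    ∑ i ∈ Finset.range n, ∑ j ∈ Finset.range (i + 1), ((i : ℝ) - (j : ℝ))⁻¹ := by
  rw [← Fin.sum_univ_eq_sum_range
    (fun i => ∑ j ∈ Finset.range (i + 1), ((i : ℝ) - (j : ℝ))⁻¹) n]
  refine Finset.sum_congr rfl fun i _ => ?_
  simp only [Fin.le_def]
  rw [Fin.sum_univ_eq_sum_range
    (fun j => (if j ≤ (i : ℕ) then (1 : ℝ) else 0) * (((i : ℕ) : ℝ) - (j : ℝ))⁻¹) n]
  simp only [ite_mul, one_mul, zero_mul, ← Finset.sum_filter]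
  refine Finset.sum_congr ?_ fun _ _ => rfl
  ext j
  simp only [Finset.mem_filter, Finset.mem_range]
  omega

/-- The lower bound (Propositions `all_linop_lb` and
`prefix_sum_singular_values` combined): any factorization `A·B = S` of the
prefix-sum matrix satisfies
`(max_i ‖B_{:,i}‖₂²)·‖A‖_F² ≥ n (log n)² / (4π²)`. -/
theorem prefix_sum_factorization_lower_bound (n : ℕ) (hn : 1 ≤ n)
    (S : Matrix (Fin n) (Fin n) ℝ)
    (hSdef : ∀ i j : Fin n, S i j = if j ≤ i then 1 else 0) :
    ∀ A B : Matrix (Fin n) (Fin n) ℝ, A * B = S →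
      (n : ℝ) * (Real.log n) ^ 2 / (4 * Real.pi ^ 2) ≤
        (⨆ i : Fin n, ∑ j, (B j i) ^ 2) * (∑ i, ∑ j, (A i j) ^ 2) := by
  intro A B hAB
  have hn' : (0 : ℝ) < n := by exact_mod_cast hn
  set M := ⨆ i : Fin n, ∑ j, (B j i) ^ 2 with hM
  have hB : ∑ i, ∑ j, B i j ^ 2 ≤ n * M := by
    rw [Finset.sum_comm]
    calc ∑ i, ∑ j, B j i ^ 2 ≤ ∑ _i : Fin n, M :=
          Finset.sum_le_sum fun i _ => le_ciSup (f := fun i : Fin n => ∑ j, B j i ^ 2)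
            (Set.finite_range _).bddAbove i
      _ = n * M := by simp
  have hpair := sq_hilbert_pairing_mul_le A B
  simp only [hAB, hSdef] at hpair
  rw [hilbert_pairing_prefix_sum] at hpair
  have hA : 0 ≤ ∑ i, ∑ j, A i j ^ 2 := by positivity
  have hlow : ((n : ℝ) * log n / 2) ^ 2 ≤ _ := pow_le_pow_left₀
    (by have := log_natCast_nonneg n; positivity) (half_mul_log_le_prefix_sum_pairing n) 2
  have hmain := (hlow.trans hpair).trans (mul_le_mul_of_nonneg_left hB (by positivity))
  rw [div_le_iff₀ (by positivity)]
  refine le_of_mul_le_mul_left ?_ hn'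
  linarith
end
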